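/- Let Σ be a finite alphabet, n ≥ 1, and let 𝒞 ⊆ Σⁿ be a code. For integers s > r ≥ 1, let 𝒞_r ⊆ Σ^{rn} denote the code {(c,…,c) (r copies) : c ∈ 𝒞} and 𝒞_s ⊆ Σ^{sn} the code {(c,…,c) (s copies) : c ∈ 𝒞}. Then for any a ∈ [0,1], ℓ(𝒞_r, a) ≤ ℓ(𝒞_s, ⌊s/r⌋·(r/s)·a). -/

import Mathlib

/-!
Given a received word `w` for the `r`-fold code, read it periodically: the word `w ∘ wrap` for the
`s`-fold code has block `i` equal to block `i % r` of `w`. The blocks `0, …, s - 1` contain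
`⌊s/r⌋` complete periods, so every agreement of a word `f` with `w` is repeated at least `⌊s/r⌋`
times between `f ∘ wrap` and `w ∘ wrap` (`card_agree_wrap`); dividing by the lengths gives the
factor `⌊s/r⌋ · (r/s)` (`agr_wrap`). Since `f ↦ f ∘ wrap` is injective and sends the `r`-fold
repetition of a codeword to its `s`-fold repetition, the list around `w` embeds in the list around
`w ∘ wrap`.
-/

open scoped BigOperators

/-- The fractional agreement between two functions. -/
noncomputable def agr {G H : Type*} (f g : G → H) : ℝ :=
  (Nat.card {x : G // f x = g x} : ℝ) / (Nat.card G : ℝ)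

/-- A (left) affine homomorphism between groups. -/
def IsAffineHom {G H : Type*} [Group G] [Group H] (φ : G → H) : Prop :=
  ∃ (h : H) (φ₀ : G →* H), ∀ g, φ g = h * φ₀ g

/-- `Λ_{G,H}`: the maximum agreement between distinct affine homomorphisms,
with the convention that it is `0` if there are at most one of them. -/
noncomputable def Lambda (G H : Type*) [Group G] [Group H] : ℝ :=
  sSup (insert (0 : ℝ)
    {a : ℝ | ∃ φ ψ : G → H, IsAffineHom φ ∧ IsAffineHom ψ ∧ φ ≠ ψ ∧ a = agr φ ψ})

/-- A group is supersolvable if it has a chain of subgroups, each normal in the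
whole group, whose consecutive quotients are cyclic (equivalently each step is
obtained from the previous one by adjoining a single generator). -/
def IsSupersolvable (G : Type*) [Group G] : Prop :=
  ∃ (k : ℕ) (s : ℕ → Subgroup G),
    s 0 = ⊥ ∧ s k = ⊤ ∧ (∀ i, (s i).Normal) ∧
    (∀ i < k, s i ≤ s (i + 1)) ∧
    (∀ i < k, ∃ g : G, s (i + 1) = s i ⊔ Subgroup.zpowers g)

/-- The maximum, over received words `w`, of the number of codewords of `C`
with agreement at least `a` with `w`. -/
noncomputable def listSize {ι α : Type*} (C : Set (ι → α)) (a : ℝ) : ℕ :=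
  sSup {L : ℕ | ∃ w : ι → α, L = {c ∈ C | agr c w ≥ a}.ncard}

/-- The `r`-fold repetition of a code `C ⊆ Σⁿ`, viewed inside `Σ^{r·n}`
(indexed by `Fin r × Fin n`). -/
def repCode {α : Type*} {n : ℕ} (C : Set (Fin n → α)) (r : ℕ) :
    Set (Fin r × Fin n → α) :=
  {w | ∃ c ∈ C, w = fun p => c p.2}

/-- Periodic indexing: position `j` of block `i` is sent to position `j` of block `i % r`. -/
def wrap {n r : ℕ} (s : ℕ) (hr : 1 ≤ r) (p : Fin s × Fin n) : Fin r × Fin n :=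
  (⟨p.1 % r, Nat.mod_lt _ hr⟩, p.2)

lemma wrap_surjective {n r s : ℕ} (hr : 1 ≤ r) (hrs : r < s) :
    Function.Surjective (wrap (n := n) s hr) := by
  rintro ⟨i, j⟩
  refine ⟨(⟨i, i.2.trans hrs⟩, j), ?_⟩
  simp [wrap, Nat.mod_eq_of_lt i.2]

/-- Each agreement of `f` and `w` occurs once in each of the `s / r` complete periods. -/
lemma card_agree_wrap {α : Type*} {n r s : ℕ} (hr : 1 ≤ r) (f w : Fin r × Fin n → α) :
    (s / r) * Nat.card {x // f x = w x} ≤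
      Nat.card {x // (f ∘ wrap s hr) x = (w ∘ wrap s hr) x} := by
  have hlt : ∀ (k : Fin (s / r)) (i : Fin r), (i : ℕ) + r * k < s := by
    intro k i
    have h1 : r * (k + 1) ≤ r * (s / r) := Nat.mul_le_mul_left r k.2
    have h2 := Nat.mul_div_le s r
    have h3 := i.2
    rw [mul_add] at h1
    omega
  have hw : ∀ (k : Fin (s / r)) (x : Fin r × Fin n),
      wrap s hr (⟨(x.1 : ℕ) + r * k, hlt k x.1⟩, x.2) = x := by
    intro k x
    ext <;> simp [wrap, Nat.mod_eq_of_lt x.1.2]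
  let g : Fin (s / r) × {x // f x = w x} →
      {x // (f ∘ wrap s hr) x = (w ∘ wrap s hr) x} := fun p =>
    ⟨(⟨(p.2.1.1 : ℕ) + r * p.1, hlt p.1 p.2.1.1⟩, p.2.1.2), by
      simp only [Function.comp_apply, hw]
      exact p.2.2⟩
  have hg : Function.Injective g := by
    rintro ⟨k, x⟩ ⟨k', x'⟩ h
    have h' := congrArg Subtype.val h
    have hx : x = x' := Subtype.ext (by
      have := congrArg (wrap s hr) h'
      simpa only [g, hw] using this)
    subst hx
    have h1 : (x.1.1 : ℕ) + r * k = x.1.1 + r * k' :=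
      congrArg (fun p : Fin s × Fin n => (p.1 : ℕ)) h'
    have h2 : (k : ℕ) = k' := Nat.eq_of_mul_eq_mul_left hr (Nat.add_left_cancel h1)
    rw [Fin.ext h2]
  simpa using Nat.card_le_card_of_injective g hg

lemma agr_wrap {α : Type*} {n r s : ℕ} (hn : 1 ≤ n) (hr : 1 ≤ r) (hrs : r < s)
    (f w : Fin r × Fin n → α) :
    (s / r : ℕ) * ((r : ℝ) / (s : ℝ)) * agr f w ≤ agr (f ∘ wrap s hr) (w ∘ wrap s hr) := by
  have hn' : (0 : ℝ) < n := by exact_mod_cast hn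
  have hr' : (0 : ℝ) < r := by exact_mod_cast hr
  have hs' : (0 : ℝ) < s := hr'.trans (by exact_mod_cast hrs)
  have h : ((s / r : ℕ) : ℝ) * (Nat.card {x // f x = w x} : ℝ) ≤
      (Nat.card {x // (f ∘ wrap s hr) x = (w ∘ wrap s hr) x} : ℝ) := by
    exact_mod_cast card_agree_wrap hr f w
  have hcard : ∀ m : ℕ, (Nat.card (Fin m × Fin n) : ℝ) = m * n := by
    intro m
    simp
  unfold agr
  rw [hcard, hcard]
  calc ((s / r : ℕ) : ℝ) * ((r : ℝ) / s) * ((Nat.card {x // f x = w x} : ℝ) / (r * n))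
      = ((s / r : ℕ) : ℝ) * (Nat.card {x // f x = w x} : ℝ) / (s * n) := by
        field_simp
    _ ≤ _ := by gcongr

/-- For `s > r ≥ 1` and any `a ∈ [0,1]`,
`ℓ(C_r, a) ≤ ℓ(C_s, ⌊s/r⌋·(r/s)·a)`. -/
theorem statement3 {α : Type*} [Fintype α] (n : ℕ) (hn : 1 ≤ n)
    (C : Set (Fin n → α)) (r s : ℕ) (hr : 1 ≤ r) (hrs : r < s)
    (a : ℝ) (ha : a ∈ Set.Icc (0 : ℝ) 1) :
    listSize (repCode C r) a ≤
      listSize (repCode C s) ((s / r : ℕ) * ((r : ℝ) / (s : ℝ)) * a) := by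
  classical
  -- The list sizes for the `s`-fold code are bounded, so each is at most their `sSup`.
  have hbdd : BddAbove {L : ℕ | ∃ w : Fin s × Fin n → α, L = {c ∈ repCode C s |
      agr c w ≥ (s / r : ℕ) * ((r : ℝ) / (s : ℝ)) * a}.ncard} := by
    refine ⟨(Set.univ : Set (Fin s × Fin n → α)).ncard, ?_⟩
    rintro L ⟨w, rfl⟩
    exact Set.ncard_le_ncard (Set.subset_univ _) Set.finite_univ
  unfold listSize
  -- With no received words at all (empty alphabet) the left supremum is `sSup ∅ = 0`.
  rcases Set.eq_empty_or_nonempty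
    {L : ℕ | ∃ w : Fin r × Fin n → α, L = {c ∈ repCode C r | agr c w ≥ a}.ncard} with h0 | h0
  · rw [h0]
    simp
  refine csSup_le h0 ?_
  rintro L ⟨w, rfl⟩
  refine le_trans ?_ (le_csSup hbdd ⟨w ∘ wrap s hr, rfl⟩)
  refine Set.ncard_le_ncard_of_injOn (fun f => f ∘ wrap s hr) ?_
    (wrap_surjective hr hrs).injective_comp_right.injOn (Set.toFinite _)
  rintro f ⟨⟨c, hc, rfl⟩, hf⟩
  refine ⟨⟨c, hc, rfl⟩, le_trans ?_ (agr_wrap hn hr hrs _ w)⟩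
  exact mul_le_mul_of_nonneg_left hf (by positivity)
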